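/- arXiv:1607.08463 — 3 statements merged into one kernel-verified Lean document; each statement's English description precedes it below -/
import Mathlib

section
/- For every A ∈ ℝ, inf{ E_H(γ) : γ : [a,b] → ℝ² locally Lipschitz, γ(a) = γ(b) = (0,0), 𝒜(γ) = A } = (λ₁ + λ₂)|A|; equivalently, in the Carnot–Carathéodory metric d_{F_H} on ℝ³ induced by F_H, the distance between (0,0,0) and (0,0,A) equals (λ₁ + λ₂)|A|. -/
open MeasureTheory Set Filter Topology
open scoped ENNReal

noncomputable section

/-- The Euclidean norm of a vector in `ℝ × ℝ`. -/
def enorm2 (v : ℝ × ℝ) : ℝ := Real.sqrt (v.1 ^ 2 + v.2 ^ 2)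

/-- The degenerate length `E(γ) = ∫ₐᵇ F(γ(t)) |γ'(t)| dt` of a planar curve. -/
def degLen (F : ℝ × ℝ → ℝ) (a b : ℝ) (γ : ℝ → ℝ × ℝ) : ℝ :=
  ∫ t in a..b, F (γ t) * enorm2 (deriv γ t)

/-- The signed area `𝒜(γ) = ∫ₐᵇ γ¹(t) (γ²)'(t) dt` of a planar curve. -/
def sArea (a b : ℝ) (γ : ℝ → ℝ × ℝ) : ℝ :=
  ∫ t in a..b, (γ t).1 * deriv (fun s => (γ s).2) t

/-- A locally Lipschitz curve on `[a,b]` joining `p` to `q`. -/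
def IsCurve (a b : ℝ) (γ : ℝ → ℝ × ℝ) (p q : ℝ × ℝ) : Prop :=
  a ≤ b ∧ LocallyLipschitz γ ∧ γ a = p ∧ γ b = q

/-- The homogeneous conformal factor `F_H(p) = √(λ₁²p₁² + λ₂²p₂²)`. -/
def FH (l1 l2 : ℝ) (p : ℝ × ℝ) : ℝ := Real.sqrt (l1 ^ 2 * p.1 ^ 2 + l2 ^ 2 * p.2 ^ 2)

/-- The singular Carnot–Carathéodory distance on `ℝ³` induced by the conformal factor `F`:
the infimum of degenerate lengths of locally Lipschitz planar curves joining the planar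
projections of `P` and `Q` whose signed area equals the difference of third coordinates. -/
def dCC (F : ℝ × ℝ → ℝ) (P Q : ℝ × ℝ × ℝ) : ℝ :=
  sInf { x | ∃ a b γ, IsCurve a b γ (P.1, P.2.1) (Q.1, Q.2.1) ∧
      sArea a b γ = Q.2.2 - P.2.2 ∧ degLen F a b γ = x }

lemma hvc_enorm2_cont : Continuous enorm2 := by
  unfold enorm2; fun_prop

lemma hvc_FH_cont (l1 l2 : ℝ) : Continuous (FH l1 l2) := by
  unfold FH; fun_prop

lemma hvc_prod (l1 l2 x y u v : ℝ) :
    FH l1 l2 (x, y) * enorm2 (u, v) =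
      Real.sqrt ((l1 * (x * v) - l2 * (u * y)) ^ 2 + (l1 * (x * u) + l2 * (y * v)) ^ 2) := by
  unfold FH enorm2
  rw [← Real.sqrt_mul (by positivity)]
  congr 1
  simp only
  ring

lemma hvc_lower (l1 l2 : ℝ) (hl1 : 0 < l1) (hl2 : 0 < l2) (a b : ℝ) (γ : ℝ → ℝ × ℝ)
    (h : IsCurve a b γ (0, 0) (0, 0)) :
    (l1 + l2) * |sArea a b γ| ≤ degLen (FH l1 l2) a b γ := by
  obtain ⟨hab, hL, ha, hb⟩ := h
  obtain ⟨K, hK⟩ := (hL.locallyLipschitzOn (s := uIcc a b)).exists_lipschitzOnWith_of_compact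
    isCompact_uIcc
  have hx : AbsolutelyContinuousOnInterval (fun t => (γ t).1) a b :=
    (LipschitzWith.prod_fst.comp_lipschitzOnWith hK).absolutelyContinuousOnInterval
  have hy : AbsolutelyContinuousOnInterval (fun t => (γ t).2) a b :=
    (LipschitzWith.prod_snd.comp_lipschitzOnWith hK).absolutelyContinuousOnInterval
  have parts := hx.integral_mul_deriv_eq_deriv_mul hy
  simp only [ha, hb] at parts
  have i1 := hy.intervalIntegrable_deriv.continuousOn_mul hx.continuousOn
  have i2 := hx.intervalIntegrable_deriv.mul_continuousOn hy.continuousOn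
  have hint : ∫ t in a..b, (l1 * ((γ t).1 * deriv (fun s => (γ s).2) t)
      - l2 * (deriv (fun s => (γ s).1) t * (γ t).2)) = (l1 + l2) * sArea a b γ := by
    rw [intervalIntegral.integral_sub (i1.const_mul _) (i2.const_mul _),
      intervalIntegral.integral_const_mul, intervalIntegral.integral_const_mul]
    unfold sArea
    linear_combination (-l2) * parts
  have hder : ∀ᵐ t, t ∈ uIcc a b → deriv γ t =
      (deriv (fun s => (γ s).1) t, deriv (fun s => (γ s).2) t) := by
    filter_upwards [hx.ae_differentiableAt, hy.ae_differentiableAt] with t h1 h2 ht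
    exact ((h1 ht).hasDerivAt.prodMk (h2 ht).hasDerivAt).deriv
  have iE0 : IntervalIntegrable (fun t => enorm2 (deriv γ t)) volume a b := by
    refine (hx.intervalIntegrable_deriv.abs.add hy.intervalIntegrable_deriv.abs).mono_fun'
      (hvc_enorm2_cont.measurable.comp (measurable_deriv γ)).aestronglyMeasurable ?_
    rw [Filter.EventuallyLE, ae_restrict_iff' measurableSet_uIoc]
    filter_upwards [hder] with t h1 ht
    rw [h1 (uIoc_subset_uIcc ht), enorm2, Real.norm_of_nonneg (Real.sqrt_nonneg _)]
    refine Real.sqrt_le_iff.2 ⟨by positivity, ?_⟩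
    simp only
    have e1 := sq_abs (deriv (fun s => (γ s).1) t)
    have e2 := sq_abs (deriv (fun s => (γ s).2) t)
    have := mul_nonneg (abs_nonneg (deriv (fun s => (γ s).1) t))
      (abs_nonneg (deriv (fun s => (γ s).2) t))
    nlinarith
  have iE : IntervalIntegrable (fun t => FH l1 l2 (γ t) * enorm2 (deriv γ t)) volume a b :=
    iE0.continuousOn_mul ((hvc_FH_cont l1 l2).comp hL.continuous).continuousOn
  have key := intervalIntegral.norm_integral_le_of_norm_le hab (f := fun t =>
      (l1 * ((γ t).1 * deriv (fun s => (γ s).2) t)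
      - l2 * (deriv (fun s => (γ s).1) t * (γ t).2))) ?_ iE
  · rw [hint, Real.norm_eq_abs, abs_mul, abs_of_pos (by positivity)] at key
    exact key
  · filter_upwards [hder] with t h1 ht
    rw [h1 (uIoc_subset_uIcc (by rwa [uIoc_of_le hab])), ← Prod.mk.eta (p := γ t), hvc_prod]
    rw [Real.norm_eq_abs]
    apply Real.abs_le_sqrt
    nlinarith [sq_nonneg (l1 * ((γ t).1 * deriv (fun s => (γ s).1) t) +
      l2 * ((γ t).2 * deriv (fun s => (γ s).2) t))]

lemma hvc_alg (X Y B : ℝ) (hX : 0 ≤ X) (hB : |Y| ≤ B) : |X + Y| ≤ X + Y + 2 * B := by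
  have := abs_le.1 hB
  have := abs_nonneg Y
  rw [abs_le]; constructor <;> linarith

lemma hvc_sqrt (u v : ℝ) : √(u ^ 2 + v ^ 2) ≤ |u| + |v| := by
  refine Real.sqrt_le_iff.2 ⟨by positivity, ?_⟩
  nlinarith [sq_abs u, sq_abs v, mul_nonneg (abs_nonneg u) (abs_nonneg v)]

set_option maxHeartbeats 1000000 in
lemma hvc_upper (l1 l2 : ℝ) (hl1 : 0 < l1) (hl2 : 0 < l2) (A N : ℝ) (hN : 0 < N) :
    ∃ a b γ, IsCurve a b γ (0, 0) (0, 0) ∧ sArea a b γ = A ∧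
      degLen (FH l1 l2) a b γ ≤ (l1 + l2) * |A| +
        (60 * |A| * (√l1 * √l2) * (1 + 2 * |√l1 / √l2 - √l2 / √l1|)) / N := by
  obtain ⟨σ, hσ, hA⟩ : ∃ σ : ℝ, σ * σ = 1 ∧ σ * |A| = A := by
    rcases le_total 0 A with h | h
    · exact ⟨1, by norm_num, by rw [abs_of_nonneg h]; ring⟩
    · exact ⟨-1, by norm_num, by rw [abs_of_nonpos h]; ring⟩
  have hA' : σ * A = |A| := by rw [← hA, ← mul_assoc, hσ, one_mul, hA]
  set m := √l1 with hm
  set n := √l2 with hn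
  have hm0 : 0 < m := Real.sqrt_pos.2 hl1
  have hn0 : 0 < n := Real.sqrt_pos.2 hl2
  have em : l1 = m ^ 2 := (Real.sq_sqrt hl1.le).symm
  have en : l2 = n ^ 2 := (Real.sq_sqrt hl2.le).symm
  clear_value m n
  subst em en
  set R := √(60 * |A| * (m * n) / N) with hR
  have hR0 : 0 ≤ R := Real.sqrt_nonneg _
  have hR2 : R ^ 2 = 60 * |A| * (m * n) / N := Real.sq_sqrt (by positivity)
  clear_value R
  let ρ : ℝ → ℝ := fun t => R * (t * (1 - t))
  let ρ' : ℝ → ℝ := fun t => R * (1 - 2 * t)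
  let x : ℝ → ℝ := fun t => ρ t * Real.cos (N * t) / m
  let y : ℝ → ℝ := fun t => σ * (ρ t * Real.sin (N * t) / n)
  let x' : ℝ → ℝ := fun t => (ρ' t * Real.cos (N * t) - ρ t * (N * Real.sin (N * t))) / m
  let y' : ℝ → ℝ := fun t => σ * ((ρ' t * Real.sin (N * t) + ρ t * (N * Real.cos (N * t))) / n)
  have dρ : ∀ t, HasDerivAt ρ (ρ' t) t := fun t => by
    have := (((hasDerivAt_id t).mul ((hasDerivAt_id t).const_sub 1))).const_mul R
    refine this.congr_deriv ?_
    simp only [ρ', id]; ring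
  have dl : ∀ t, HasDerivAt (fun t => N * t) N t := fun t => by
    simpa using (hasDerivAt_id t).const_mul N
  have dx : ∀ t, HasDerivAt x (x' t) t := fun t => by
    refine (((dρ t).mul (dl t).cos).div_const m).congr_deriv ?_
    simp only [x']; ring
  have dy : ∀ t, HasDerivAt y (y' t) t := fun t => by
    refine ((((dρ t).mul (dl t).sin).div_const n).const_mul σ).congr_deriv ?_
    simp only [y']; ring
  have cx : Continuous x := by fun_prop
  have cy : Continuous y := by fun_prop
  have cx' : Continuous x' := by fun_prop
  have cy' : Continuous y' := by fun_prop
  let P : ℝ → ℝ := fun t => t ^ 3 / 3 - t ^ 4 / 2 + t ^ 5 / 5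
  have dP : ∀ t, HasDerivAt P ((t * (1 - t)) ^ 2) t := fun t => by
    refine ((((hasDerivAt_pow 3 t).div_const 3).sub ((hasDerivAt_pow 4 t).div_const 2)).add
      ((hasDerivAt_pow 5 t).div_const 5)).congr_deriv ?_
    norm_num; ring
  have cs : ∀ t, x t * y' t - x' t * y t = σ * N * R ^ 2 / (m * n) * (t * (1 - t)) ^ 2 := by
    intro t
    have := Real.sin_sq_add_cos_sq (N * t)
    simp only [x, y, x', y', ρ]
    generalize Real.sin (N * t) = s at *
    generalize Real.cos (N * t) = c at *
    field_simp
    linear_combination (σ * N * R ^ 2 * t ^ 2 * (1 - t) ^ 2) * this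
  have x0 : x 0 = 0 := by simp [x, ρ]
  have x1 : x 1 = 0 := by simp [x, ρ]
  have y0 : y 0 = 0 := by simp [y, ρ]
  have y1 : y 1 = 0 := by simp [y, ρ]
  have j1 : IntervalIntegrable (fun t => x t * y' t) volume 0 1 :=
    (cx.mul cy').intervalIntegrable _ _
  have j2 : IntervalIntegrable (fun t => x' t * y t) volume 0 1 :=
    (cx'.mul cy).intervalIntegrable _ _
  have I1 : ∫ t in (0:ℝ)..1, x t * y' t = A := by
    have := intervalIntegral.integral_eq_sub_of_hasDerivAt (a := 0) (b := 1)
      (f := fun t => (x t * y t + σ * N * R ^ 2 / (m * n) * P t) / 2) (f' := fun t => x t * y' t)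
      (fun t _ => by
        refine ((((dx t).mul (dy t)).add ((dP t).const_mul _)).div_const 2).congr_deriv ?_
        rw [← cs]; ring) j1
    rw [this, x0, x1, hR2]
    simp only [P]
    field_simp
    linear_combination 60 * hA
  have I2 : ∫ t in (0:ℝ)..1, x' t * y t = -A := by
    have h := intervalIntegral.integral_eq_sub_of_hasDerivAt (a := 0) (b := 1)
      (f := fun t => x t * y t) (f' := fun t => x' t * y t + x t * y' t)
      (fun t _ => (dx t).mul (dy t))
      (j2.add j1)
    rw [intervalIntegral.integral_add j2 j1, I1, x0, x1] at h
    linarith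
  let γ : ℝ → ℝ × ℝ := fun t => (x t, y t)
  have dγ : deriv γ = fun t => (x' t, y' t) := funext fun t => ((dx t).prodMk (dy t)).deriv
  refine ⟨0, 1, γ, ⟨zero_le_one, ?_, by simp [γ, x0, y0], by simp [γ, x1, y1]⟩, ?_, ?_⟩
  · apply ContDiff.locallyLipschitz (𝕂 := ℝ)
    rw [contDiff_one_iff_deriv]
    refine ⟨fun t => ((dx t).prodMk (dy t)).differentiableAt, ?_⟩
    rw [dγ]; exact cx'.prodMk cy'
  · unfold sArea
    rw [← I1]
    congr 1
    funext t
    simp only [γ]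
    rw [(dy t).deriv]
  · unfold degLen
    rw [dγ]
    set C := R ^ 2 * (1 + 2 * |m / n - n / m|) with hC
    have cD : Continuous fun t => σ * (m ^ 2 * (x t * y' t) - n ^ 2 * (x' t * y t)) := by fun_prop
    have hle : ∫ t in (0:ℝ)..1, FH (m ^ 2) (n ^ 2) (γ t) * enorm2 (x' t, y' t) ≤
        ∫ t in (0:ℝ)..1, (σ * (m ^ 2 * (x t * y' t) - n ^ 2 * (x' t * y t)) + C) := by
      apply intervalIntegral.integral_mono_on zero_le_one
      · apply Continuous.intervalIntegrable
        exact ((hvc_FH_cont _ _).comp (cx.prodMk cy)).mul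
          (hvc_enorm2_cont.comp (cx'.prodMk cy'))
      · exact (cD.add continuous_const).intervalIntegrable _ _
      · intro t ht
        simp only [γ]
        rw [hvc_prod]
        have hρ : |ρ t * ρ' t| ≤ R ^ 2 := by
          have h1 : |ρ t| ≤ R := by
            rw [abs_le]; simp only [ρ]
            have : 0 ≤ t * (1 - t) := mul_nonneg ht.1 (by linarith [ht.2])
            constructor
            · nlinarith [mul_nonneg hR0 this]
            · nlinarith [mul_nonneg hR0 (show 0 ≤ 1 - t * (1 - t) by nlinarith [ht.1, ht.2])]
          have h2 : |ρ' t| ≤ R := by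
            rw [abs_le]; simp only [ρ']
            constructor
            · nlinarith [mul_nonneg hR0 (show 0 ≤ 1 - t by linarith [ht.2])]
            · nlinarith [mul_nonneg hR0 ht.1]
          rw [abs_mul, sq]
          exact mul_le_mul h1 h2 (abs_nonneg _) hR0
        have hs := Real.sin_sq_add_cos_sq (N * t)
        set s := Real.sin (N * t) with hsdef
        set c := Real.cos (N * t) with hcdef
        have hG : m ^ 2 * (x t * x' t) + n ^ 2 * (y t * y' t) = ρ t * ρ' t := by
          simp only [x, y, x', y', ← hsdef, ← hcdef]
          field_simp
          linear_combination (ρ t * s * (ρ' t * s + ρ t * N * c)) * hσ + ρ t * ρ' t * hs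
        have hD : σ * (m ^ 2 * (x t * y' t) - n ^ 2 * (x' t * y t)) =
            ρ t ^ 2 * N * (m / n * c ^ 2 + n / m * s ^ 2)
              + ρ t * ρ' t * (s * c) * (m / n - n / m) := by
          simp only [x, y, x', y', ← hsdef, ← hcdef]
          field_simp
          linear_combination (ρ t * (m ^ 2 * c * (ρ' t * s + ρ t * N * c) -
            n ^ 2 * s * (ρ' t * c - ρ t * N * s))) * hσ
        set D := m ^ 2 * (x t * y' t) - n ^ 2 * (x' t * y t) with hDdef
        have hB : |ρ t * ρ' t * (s * c) * (m / n - n / m)| ≤ R ^ 2 * |m / n - n / m| := by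
          rw [abs_mul, abs_mul]
          refine mul_le_mul_of_nonneg_right ?_ (abs_nonneg _)
          have : |s * c| ≤ 1 := by
            rw [abs_le]; constructor <;> nlinarith [sq_nonneg (s + c), sq_nonneg (s - c)]
          nlinarith [abs_nonneg (ρ t * ρ' t), abs_nonneg (s * c)]
        have hpos : 0 ≤ ρ t ^ 2 * N * (m / n * c ^ 2 + n / m * s ^ 2) := by positivity
        have hDsq : D ^ 2 = (σ * D) ^ 2 := by linear_combination (-D ^ 2) * hσ
        have habsD : |σ * D| ≤ σ * D + 2 * (R ^ 2 * |m / n - n / m|) := by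
          rw [hD]
          exact hvc_alg _ _ _ hpos hB
        rw [hG, hDsq]
        have := hvc_sqrt (σ * D) (ρ t * ρ' t)
        rw [hC]
        linarith
    refine hle.trans (le_of_eq ?_)
    rw [intervalIntegral.integral_add (cD.intervalIntegrable _ _)
      (continuous_const.intervalIntegrable _ _), intervalIntegral.integral_const_mul,
      intervalIntegral.integral_sub (j1.const_mul _) (j2.const_mul _),
      intervalIntegral.integral_const_mul, intervalIntegral.integral_const_mul, I1, I2,
      intervalIntegral.integral_const, hC, hR2]
    simp only [sub_zero, one_smul]
    rw [← hA']
    ring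

/-- in the homogeneous metric, the cost of enclosing signed area `A` by loops based
at the origin is exactly `(λ₁+λ₂)|A|`; equivalently the Carnot–Carathéodory distance between
`(0,0,0)` and `(0,0,A)` equals `(λ₁+λ₂)|A|`. -/
theorem homogeneous_vertical_cost (l1 l2 : ℝ) (hl1 : 0 < l1) (hl2 : 0 < l2) (A : ℝ) :
    sInf { x | ∃ a b γ, IsCurve a b γ (0, 0) (0, 0) ∧ sArea a b γ = A ∧
        degLen (FH l1 l2) a b γ = x } = (l1 + l2) * |A| ∧
    dCC (FH l1 l2) (0, 0, 0) (0, 0, A) = (l1 + l2) * |A| := by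
  have main : sInf { x | ∃ a b γ, IsCurve a b γ (0, 0) (0, 0) ∧ sArea a b γ = A ∧
        degLen (FH l1 l2) a b γ = x } = (l1 + l2) * |A| := by
    apply IsGLB.csInf_eq
    · constructor
      · rintro _ ⟨a, b, γ, hγ, hA, rfl⟩
        rw [← hA]
        exact hvc_lower l1 l2 hl1 hl2 a b γ hγ
      · intro w hw
        have hlim := (tendsto_const_nhds (x := (l1 + l2) * |A|)).add
          ((tendsto_const_nhds (x := 60 * |A| * (√l1 * √l2) *
            (1 + 2 * |√l1 / √l2 - √l2 / √l1|))).div_atTop (tendsto_id (α := ℝ) (x := atTop)))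
        rw [add_zero] at hlim
        refine ge_of_tendsto hlim ?_
        filter_upwards [eventually_gt_atTop 0] with N hN
        obtain ⟨a, b, γ, hγ, hA, hle⟩ := hvc_upper l1 l2 hl1 hl2 A N hN
        exact (hw ⟨a, b, γ, hγ, hA, rfl⟩).trans hle
    · obtain ⟨a, b, γ, hγ, hA, hle⟩ := hvc_upper l1 l2 hl1 hl2 A 1 one_pos
      exact ⟨_, a, b, γ, hγ, hA, rfl⟩
  refine ⟨main, ?_⟩
  unfold dCC
  simpa only [sub_zero] using main
end
end

section
/- Let b ∈ ℝ and let γ = (γ¹,γ²) : [0,1] → ℝ² be locally Lipschitz with 1 + b|γ(t)|² ≥ 0 for all t. Define R(t) := |γ(t)|² and α(t) := 2∫₀ᵗ (γ¹(s)(γ²)'(s) − γ²(s)(γ¹)'(s)) ds. Then the degenerate length of γ for the radial conformal factor √(r² + b r⁴) equals the length of the planar curve (R,α) in the conformal metric with factor √(1+bR)/2: ∫₀¹ √(|γ(t)|² + b|γ(t)|⁴) |γ'(t)| dt = ∫₀¹ (√(1 + bR(t))/2) √(R'(t)² + α'(t)²) dt. -/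
open MeasureTheory Set Filter Topology
open scoped ENNReal

noncomputable section

theorem aux_intInt (g : ℝ → ℝ) (hg : LocallyLipschitz g) :
    IntervalIntegrable (deriv g) volume 0 1 := by
  obtain ⟨K, hK⟩ := (hg.locallyLipschitzOn (s := Set.Icc (-1:ℝ) 2)).exists_lipschitzOnWith_of_compact
    isCompact_Icc
  refine (intervalIntegrable_const (c := (K:ℝ))).mono_fun
    (measurable_deriv g).aestronglyMeasurable ?_
  refine (ae_restrict_iff' measurableSet_uIoc).2 (Filter.Eventually.of_forall fun t ht => ?_)
  rw [Set.uIoc_of_le zero_le_one] at ht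
  have := norm_deriv_le_of_lipschitzOn (Icc_mem_nhds (by linarith [ht.1]) (by linarith [ht.2])) hK
  simpa using this

theorem aux_diff (g : ℝ → ℝ × ℝ) (hg : LocallyLipschitz g) :
    ∀ᵐ t, t ∈ Set.Icc (0:ℝ) 1 → DifferentiableAt ℝ g t := by
  obtain ⟨K, hK⟩ := (hg.locallyLipschitzOn (s := Set.Icc (-1:ℝ) 2)).exists_lipschitzOnWith_of_compact
    isCompact_Icc
  filter_upwards [hK.ae_differentiableWithinAt_of_mem_real] with t ht h
  exact (ht ⟨by linarith [h.1], by linarith [h.2]⟩).differentiableAt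
    (Icc_mem_nhds (by linarith [h.1]) (by linarith [h.2]))

theorem aux_pt (b x y u v : ℝ) (h : 0 ≤ 1 + b * (x ^ 2 + y ^ 2)) :
    Real.sqrt ((x ^ 2 + y ^ 2) + b * (x ^ 2 + y ^ 2) ^ 2) * Real.sqrt (u ^ 2 + v ^ 2) =
      (Real.sqrt (1 + b * (x ^ 2 + y ^ 2)) / 2) *
        Real.sqrt ((2 * (x * u + y * v)) ^ 2 + (2 * (x * v - y * u)) ^ 2) := by
  have e1 : (x ^ 2 + y ^ 2) + b * (x ^ 2 + y ^ 2) ^ 2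
      = (1 + b * (x ^ 2 + y ^ 2)) * (x ^ 2 + y ^ 2) := by ring
  have e2 : (2 * (x * u + y * v)) ^ 2 + (2 * (x * v - y * u)) ^ 2
      = 2 ^ 2 * ((x ^ 2 + y ^ 2) * (u ^ 2 + v ^ 2)) := by ring
  rw [e1, e2, Real.sqrt_mul h, Real.sqrt_mul (by positivity), Real.sqrt_mul (by positivity),
    Real.sqrt_sq (by norm_num)]
  ring

theorem aux_sq (v : ℝ × ℝ) : enorm2 v ^ 2 = v.1 ^ 2 + v.2 ^ 2 :=
  Real.sq_sqrt (by positivity)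

/-- the change of variables `R = |γ|²`, `α = 4 × (polar area)` turns the
degenerate length for the radial conformal factor `√(r² + b r⁴)` into the length of the planar
curve `(R,α)` with conformal factor `√(1+bR)/2`. -/
theorem desingularization_identity (b : ℝ) (γ : ℝ → ℝ × ℝ) (hγ : LocallyLipschitz γ)
    (hpos : ∀ t ∈ Set.Icc (0:ℝ) 1, 0 ≤ 1 + b * enorm2 (γ t) ^ 2)
    (R α : ℝ → ℝ)
    (hR : R = fun t => enorm2 (γ t) ^ 2)
    (hα : α = fun t => 2 * ∫ s in (0:ℝ)..t,
      ((γ s).1 * deriv (fun u => (γ u).2) s - (γ s).2 * deriv (fun u => (γ u).1) s)) :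
    (∫ t in (0:ℝ)..1, Real.sqrt (enorm2 (γ t) ^ 2 + b * enorm2 (γ t) ^ 4) * enorm2 (deriv γ t))
      = ∫ t in (0:ℝ)..1,
          (Real.sqrt (1 + b * R t) / 2) * Real.sqrt (deriv R t ^ 2 + deriv α t ^ 2) := by
  have h1 : LocallyLipschitz (fun u => (γ u).1) := LipschitzWith.prod_fst.locallyLipschitz.comp hγ
  have h2 : LocallyLipschitz (fun u => (γ u).2) := LipschitzWith.prod_snd.locallyLipschitz.comp hγ
  have hI : IntervalIntegrable (fun s => (γ s).1 * deriv (fun u => (γ u).2) s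
      - (γ s).2 * deriv (fun u => (γ u).1) s) volume 0 1 :=
    ((aux_intInt _ h2).continuousOn_mul h1.continuous.continuousOn).sub
      ((aux_intInt _ h1).continuousOn_mul h2.continuous.continuousOn)
  apply intervalIntegral.integral_congr_ae
  filter_upwards [aux_diff γ hγ, hI.ae_hasDerivAt_integral] with t ht1 ht2 ht
  rw [Set.uIoc_of_le zero_le_one] at ht
  have ht' : t ∈ Set.Icc (0:ℝ) 1 := ⟨ht.1.le, ht.2⟩
  have hd := (ht1 ht').hasDerivAt
  have hd1 : HasDerivAt (fun u => (γ u).1) (deriv γ t).1 t := by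
    exact (hasFDerivAt_fst (𝕜 := ℝ) (p := γ t)).comp_hasDerivAt t hd
  have hd2 : HasDerivAt (fun u => (γ u).2) (deriv γ t).2 t := by
    exact (hasFDerivAt_snd (𝕜 := ℝ) (p := γ t)).comp_hasDerivAt t hd
  have hα' : deriv α t = 2 * ((γ t).1 * (deriv γ t).2 - (γ t).2 * (deriv γ t).1) := by
    have := (ht2 (by rwa [Set.uIcc_of_le zero_le_one]) 0 (by simp)).const_mul 2
    rw [hα, this.deriv, hd1.deriv, hd2.deriv]
  have hR' : deriv R t = 2 * ((γ t).1 * (deriv γ t).1 + (γ t).2 * (deriv γ t).2) := by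
    have hR2 : R = fun t => (γ t).1 ^ 2 + (γ t).2 ^ 2 := by
      rw [hR]; funext s; exact aux_sq _
    have := (hd1.fun_pow 2).fun_add (hd2.fun_pow 2)
    rw [hR2, this.deriv]
    push_cast
    ring
  have hp := hpos t ht'
  rw [aux_sq] at hp
  have e4 : enorm2 (γ t) ^ 4 = ((γ t).1 ^ 2 + (γ t).2 ^ 2) ^ 2 := by
    rw [← aux_sq]; ring
  have eR : R t = (γ t).1 ^ 2 + (γ t).2 ^ 2 := by rw [hR]; exact aux_sq _
  rw [hα', hR', e4, eR, aux_sq]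
  exact aux_pt b _ _ _ _ hp
end
end

section
/- Let b > 0 and r₀ > 0, and define the spiral σ : (0, r₀] → ℝ² by σ(r) := (r cos(1/(√b · r)), r sin(1/(√b · r))). Then σ has infinite Euclidean arclength, ∫₀^{r₀} |σ'(r)| dr = +∞, while its degenerate length with respect to the conformal factor √(r² + b r⁴) is finite: ∫₀^{r₀} √(|σ(r)|² + b|σ(r)|⁴) |σ'(r)| dr < ∞. -/
open MeasureTheory Set Filter Topology
open scoped ENNReal

noncomputable section

lemma spiral_enorm_deriv (s r : ℝ) (hs : 0 < s) (hr : 0 < r) :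
    enorm2 (deriv (fun r : ℝ => (r * Real.cos (1 / (s * r)), r * Real.sin (1 / (s * r)))) r)
      = Real.sqrt (1 + (1 / (s * r)) ^ 2) := by
  have hsr : s * r ≠ 0 := by positivity
  have h1 : HasDerivAt (fun r : ℝ => 1 / (s * r)) (-(1 / (s * r ^ 2))) r := by
    have h := ((hasDerivAt_id r).const_mul s).inv hsr
    have h2 : HasDerivAt (fun r : ℝ => 1 / (s * r)) (-(s * 1) / (s * id r) ^ 2) r := by
      refine h.congr_of_eventuallyEq (Eventually.of_forall fun x => ?_)
      simp
    convert h2 using 1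
    simp only [id]
    field_simp
  have hc := (hasDerivAt_id r).mul h1.cos
  have hsn := (hasDerivAt_id r).mul h1.sin
  have h := hc.prodMk hsn
  have h' : deriv (fun r : ℝ => (r * Real.cos (1 / (s * r)), r * Real.sin (1 / (s * r)))) r = _ :=
    h.deriv
  rw [h']
  unfold enorm2
  congr 1
  simp only [id]
  have e := Real.sin_sq_add_cos_sq (1 / (s * r))
  have e2 : r * (1 / (s * r ^ 2)) = 1 / (s * r) := by field_simp
  generalize Real.sin (1 / (s * r)) = S at *
  generalize Real.cos (1 / (s * r)) = C at *
  rw [← e2]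
  generalize 1 / (s * r ^ 2) = k
  linear_combination (1 + r ^ 2 * k ^ 2) * e

/-- the limiting minimizing spiral `σ(r) = (r cos(1/(√b r)), r sin(1/(√b r)))`
has infinite Euclidean arclength on `(0, r₀]`, yet finite degenerate length with respect to the
conformal factor `√(r² + b r⁴)`. -/
theorem spiral_infinite_euclidean_finite_degenerate (b r0 : ℝ) (hb : 0 < b) (hr0 : 0 < r0)
    (σ : ℝ → ℝ × ℝ)
    (hσ : σ = fun r =>
      (r * Real.cos (1 / (Real.sqrt b * r)), r * Real.sin (1 / (Real.sqrt b * r)))) :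
    (∫⁻ r in Set.Ioc (0:ℝ) r0, ENNReal.ofReal (enorm2 (deriv σ r))) = ⊤ ∧
    IntervalIntegrable
      (fun r => Real.sqrt (enorm2 (σ r) ^ 2 + b * enorm2 (σ r) ^ 4) * enorm2 (deriv σ r))
      volume 0 r0 := by
  have hs : 0 < Real.sqrt b := Real.sqrt_pos.2 hb
  have hb2 : b = Real.sqrt b ^ 2 := (Real.sq_sqrt hb.le).symm
  have hd : ∀ r : ℝ, 0 < r → enorm2 (deriv σ r) = Real.sqrt (1 + (1 / (Real.sqrt b * r)) ^ 2) := by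
    intro r hr
    rw [hσ]
    exact spiral_enorm_deriv _ r hs hr
  have hn : ∀ r : ℝ, 0 < r → enorm2 (σ r) = r := by
    intro r hr
    rw [hσ]
    unfold enorm2
    rw [Real.sqrt_eq_iff_eq_sq (by positivity) hr.le]
    have e := Real.sin_sq_add_cos_sq (1 / (Real.sqrt b * r))
    linear_combination (r ^ 2) * e
  constructor
  · by_contra hne
    have hlt : (∫⁻ r in Set.Ioc (0:ℝ) r0, ENNReal.ofReal (enorm2 (deriv σ r))) < ⊤ :=
      lt_top_iff_ne_top.2 hne
    have hle : (∫⁻ r in Set.Ioc (0:ℝ) r0, ENNReal.ofReal ((Real.sqrt b)⁻¹ * r⁻¹)) < ⊤ := by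
      refine lt_of_le_of_lt (setLIntegral_mono' measurableSet_Ioc ?_) hlt
      intro r hr
      apply ENNReal.ofReal_le_ofReal
      rw [hd r hr.1]
      apply Real.le_sqrt_of_sq_le
      have : (Real.sqrt b)⁻¹ * r⁻¹ = 1 / (Real.sqrt b * r) := by
        rw [one_div, mul_inv]
      rw [this]
      linarith
    have hint : IntegrableOn (fun r : ℝ => (Real.sqrt b)⁻¹ * r⁻¹) (Set.Ioc 0 r0) volume := by
      refine ⟨by fun_prop, ?_⟩
      rw [hasFiniteIntegral_iff_ofReal]
      · exact hle
      · filter_upwards [ae_restrict_mem measurableSet_Ioc] with r hr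
        have := hr.1
        positivity
    have h2 : IntervalIntegrable (fun r : ℝ => r⁻¹) volume 0 r0 := by
      rw [intervalIntegrable_iff_integrableOn_Ioc_of_le hr0.le]
      have := hint.const_mul (Real.sqrt b)
      refine this.congr (Eventually.of_forall fun r => ?_)
      simp only []
      field_simp
    rw [intervalIntegrable_inv_iff] at h2
    rcases h2 with h2 | h2
    · exact hr0.ne h2
    · exact h2 Set.left_mem_uIcc
  · have hg : IntervalIntegrable (fun r : ℝ => (1 + b * r ^ 2) / Real.sqrt b) volume 0 r0 :=
      Continuous.intervalIntegrable (by fun_prop) _ _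
    refine hg.congr ?_
    intro r hr
    rw [Set.uIoc_of_le hr0.le] at hr
    have hr1 := hr.1
    simp only []
    rw [hn r hr1, hd r hr1, ← Real.sqrt_mul (by positivity)]
    symm
    rw [Real.sqrt_eq_iff_eq_sq (by positivity) (by positivity)]
    have h3 : (1 / (Real.sqrt b * r)) ^ 2 = 1 / (b * r ^ 2) := by
      rw [div_pow, mul_pow, ← hb2, one_pow]
    rw [h3, div_pow, ← hb2]
    field_simp
    try ring
end
end
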